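/- Let r : ℝ → ℝ be a C², 2π-periodic function with r > 0 and χ := r² + 2r′² − r r″ > 0 everywhere, and set r₀²(φ,t) := (r(φ) − t r′(φ))² + t² r(φ)², r₁²(φ,t) := (r(φ) + t r′(φ))² + t² r(φ)². Then the iterated improper integral ∫₀^{2π} ∫₀^∞ [ 2χ(φ)/(χ(φ) t² + r(φ)²) + χ(φ)(t r′(φ) − r(φ))/( r(φ) · r₀²(φ,t) ) − χ(φ)(r(φ) + t r′(φ))/( r(φ) · r₁²(φ,t) ) ] dt dφ converges and equals π ( ∫₀^{2π} √(χ(φ))/r(φ) dφ − 2π ). -/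

import Mathlib

/-!
For fixed `φ` write `a = r φ`, `b = r' φ`, `c = χ φ`, `s = a² + b²`. The inner integrand has the
elementary primitive

`(2√c/a) arctan (√c t/a) + (bc/2as) log (r₀²/r₁²) - (c/s) (arctan ((st-ab)/a²) + arctan ((st+ab)/a²))`

which vanishes at `t = 0` and tends to `π (√c/a - c/s)` as `t → ∞`. Integrability follows since
adding `c/r₀² + c/r₁²`, the derivative of a bounded sum of arctangents, makes the integrand
nonnegative (`integrand_add_nonneg`).

For the outer integral, `χ/(r² + r'²) = 1 - (arctan (r'/r))'`, so by periodicity its integral over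
a period is `2π`.
-/

open Real MeasureTheory Set

noncomputable section

/-- `r₀²(φ,t) = (r(φ) − t r′(φ))² + t² r(φ)²`. -/
def r0sq (r : ℝ → ℝ) (φ t : ℝ) : ℝ := (r φ - t * deriv r φ) ^ 2 + t ^ 2 * r φ ^ 2

/-- `r₁²(φ,t) = (r(φ) + t r′(φ))² + t² r(φ)²`. -/
def r1sq (r : ℝ → ℝ) (φ t : ℝ) : ℝ := (r φ + t * deriv r φ) ^ 2 + t ^ 2 * r φ ^ 2

/-- `χ(φ) = r² + 2r′² − r r″`. -/
def chiF (r : ℝ → ℝ) (φ : ℝ) : ℝ :=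
  r φ ^ 2 + 2 * (deriv r φ) ^ 2 - r φ * deriv (deriv r) φ

lemma quad_pos {a : ℝ} (ha : 0 < a) (b t : ℝ) : 0 < (a - t * b) ^ 2 + t ^ 2 * a ^ 2 := by
  rcases eq_or_ne t 0 with rfl | ht
  · simpa using pow_pos ha 2
  · positivity

lemma hasDerivAt_log_quad {a : ℝ} (ha : 0 < a) (b t : ℝ) :
    HasDerivAt (fun t => Real.log ((a - t * b) ^ 2 + t ^ 2 * a ^ 2))
      ((2 * (a ^ 2 + b ^ 2) * t - 2 * a * b) / ((a - t * b) ^ 2 + t ^ 2 * a ^ 2)) t := by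
  have h1 : HasDerivAt (fun t : ℝ => a - t * b) (-b) t := by
    simpa using ((hasDerivAt_id t).mul_const b).const_sub a
  have h2 : HasDerivAt (fun t : ℝ => t ^ 2 * a ^ 2) (2 * t * a ^ 2) t := by
    simpa using (hasDerivAt_pow 2 t).mul_const (a ^ 2)
  refine (((h1.pow 2).add h2).log (quad_pos ha b t).ne').congr_deriv ?_
  congr 1
  simp only [Nat.cast_ofNat, Nat.add_one_sub_one, pow_one]
  ring

lemma hasDerivAt_arctan_quad {a : ℝ} (ha : 0 < a) (b t : ℝ) :
    HasDerivAt (fun t => Real.arctan (((a ^ 2 + b ^ 2) * t - a * b) / a ^ 2))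
      (a ^ 2 / ((a - t * b) ^ 2 + t ^ 2 * a ^ 2)) t := by
  have h1 : HasDerivAt (fun t : ℝ => ((a ^ 2 + b ^ 2) * t - a * b) / a ^ 2)
      ((a ^ 2 + b ^ 2) / a ^ 2) t := by
    simpa using (((hasDerivAt_id t).const_mul (a ^ 2 + b ^ 2)).sub_const (a * b)).div_const (a ^ 2)
  refine h1.arctan.congr_deriv ?_
  have hq := (quad_pos ha b t).ne'
  have hs : a ^ 2 + b ^ 2 ≠ 0 := by positivity
  -- completing the square: `(st - ab)² + a⁴ = s r₀²`
  have hk : 1 + (((a ^ 2 + b ^ 2) * t - a * b) / a ^ 2) ^ 2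
      = (a ^ 2 + b ^ 2) * ((a - t * b) ^ 2 + t ^ 2 * a ^ 2) / a ^ 4 := by
    field_simp
    ring
  rw [hk]
  field_simp

lemma tendsto_arctan_affine {k : ℝ} (hk : 0 < k) (m : ℝ) {d : ℝ} (hd : 0 < d) :
    Filter.Tendsto (fun t => Real.arctan ((k * t - m) / d)) Filter.atTop (nhds (π / 2)) := by
  refine (tendsto_arctan_atTop.mono_right nhdsWithin_le_nhds).comp ?_
  refine Filter.Tendsto.atTop_div_const hd ?_
  simpa only [sub_eq_add_neg, id] using
    Filter.tendsto_atTop_add_const_right _ (-m) (Filter.tendsto_id.const_mul_atTop hk)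

lemma tendsto_log_ratio {a : ℝ} (ha : 0 < a) (b : ℝ) :
    Filter.Tendsto (fun t => Real.log ((a - t * b) ^ 2 + t ^ 2 * a ^ 2)
      - Real.log ((a - t * (-b)) ^ 2 + t ^ 2 * a ^ 2)) Filter.atTop (nhds 0) := by
  have hi : Filter.Tendsto (fun t : ℝ => t⁻¹) Filter.atTop (nhds 0) := tendsto_inv_atTop_zero
  have key : ∀ b : ℝ, Filter.Tendsto (fun t : ℝ => Real.log ((a * t⁻¹ - b) ^ 2 + a ^ 2))
      Filter.atTop (nhds (Real.log (b ^ 2 + a ^ 2))) := by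
    intro b
    have h1 := (((hi.const_mul a).sub_const b).pow 2).add_const (a ^ 2)
    have := h1.log (by positivity)
    simpa using this
  have h := (key b).sub (key (-b))
  rw [neg_sq, sub_self] at h
  refine h.congr' ?_
  filter_upwards [Filter.eventually_gt_atTop 0] with t ht
  -- both logarithms are shifted by the same `log t²`
  have e : ∀ b : ℝ, Real.log ((a - t * b) ^ 2 + t ^ 2 * a ^ 2)
      = Real.log (t ^ 2) + Real.log ((a * t⁻¹ - b) ^ 2 + a ^ 2) := by
    intro b
    rw [← Real.log_mul (by positivity) (by positivity)]
    congr 1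
    field_simp
  rw [e b, e (-b)]
  ring

/-- The inner integrand at fixed `φ`, with `a = r φ`, `b = r' φ`, `c = χ φ`; the third term uses
that `r₁²` is `r₀²` with `b` replaced by `-b`. -/
def integrand (a b c t : ℝ) : ℝ :=
  2 * c / (c * t ^ 2 + a ^ 2) + c * (t * b - a) / (a * ((a - t * b) ^ 2 + t ^ 2 * a ^ 2))
    - c * (a + t * b) / (a * ((a - t * (-b)) ^ 2 + t ^ 2 * a ^ 2))

/-- A primitive of `integrand a b c`, vanishing at `0`. -/
def primitive (a b c t : ℝ) : ℝ :=
  2 * √c / a * Real.arctan ((√c * t - 0) / a)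
    + b * c / (2 * a * (a ^ 2 + b ^ 2)) * (Real.log ((a - t * b) ^ 2 + t ^ 2 * a ^ 2)
        - Real.log ((a - t * (-b)) ^ 2 + t ^ 2 * a ^ 2))
    - c / (a ^ 2 + b ^ 2) * (Real.arctan (((a ^ 2 + b ^ 2) * t - a * b) / a ^ 2)
        + Real.arctan (((a ^ 2 + (-b) ^ 2) * t - a * (-b)) / a ^ 2))

lemma hasDerivAt_primitive {a c : ℝ} (ha : 0 < a) (hc : 0 < c) (b t : ℝ) :
    HasDerivAt (primitive a b c) (integrand a b c t) t := by
  have h1 : HasDerivAt (fun t : ℝ => Real.arctan ((√c * t - 0) / a))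
      (√c * a / (c * t ^ 2 + a ^ 2)) t := by
    have h : HasDerivAt (fun t : ℝ => (√c * t - 0) / a) (√c / a) t := by
      simpa using ((hasDerivAt_id t).const_mul (√c)).div_const a
    refine h.arctan.congr_deriv ?_
    have hk : 1 + ((√c * t - 0) / a) ^ 2 = (c * t ^ 2 + a ^ 2) / a ^ 2 := by
      rw [sub_zero, div_pow, mul_pow, Real.sq_sqrt hc.le]
      field_simp
      ring
    have : c * t ^ 2 + a ^ 2 ≠ 0 := by positivity
    rw [hk]
    field_simp
  refine (((h1.const_mul (2 * √c / a)).add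
    (((hasDerivAt_log_quad ha b t).sub (hasDerivAt_log_quad ha (-b) t)).const_mul
      (b * c / (2 * a * (a ^ 2 + b ^ 2))))).sub
    (((hasDerivAt_arctan_quad ha b t).add (hasDerivAt_arctan_quad ha (-b) t)).const_mul
      (c / (a ^ 2 + b ^ 2)))).congr_deriv ?_
  unfold integrand
  have hp := (quad_pos ha b t).ne'
  have hq := (quad_pos ha (-b) t).ne'
  have hs : a ^ 2 + b ^ 2 ≠ 0 := by positivity
  have e1 : 2 * √c / a * (√c * a / (c * t ^ 2 + a ^ 2)) = 2 * c / (c * t ^ 2 + a ^ 2) := by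
    have : c * t ^ 2 + a ^ 2 ≠ 0 := by positivity
    field_simp
    rw [Real.sq_sqrt hc.le]
  rw [e1]
  generalize hP : (a - t * b) ^ 2 + t ^ 2 * a ^ 2 = P at *
  generalize hQ : (a - t * (-b)) ^ 2 + t ^ 2 * a ^ 2 = Q at *
  generalize 2 * c / (c * t ^ 2 + a ^ 2) = X
  field_simp
  ring

lemma tendsto_primitive {a c : ℝ} (ha : 0 < a) (hc : 0 < c) (b : ℝ) :
    Filter.Tendsto (primitive a b c) Filter.atTop
      (nhds (π * (√c / a - c / (a ^ 2 + b ^ 2)))) := by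
  have hs : ∀ b : ℝ, 0 < a ^ 2 + b ^ 2 := fun b => by positivity
  have h := ((((tendsto_arctan_affine (Real.sqrt_pos.2 hc) 0 ha).const_mul (2 * √c / a)).add
    ((tendsto_log_ratio ha b).const_mul (b * c / (2 * a * (a ^ 2 + b ^ 2))))).sub
    (((tendsto_arctan_affine (hs b) (a * b) (pow_pos ha 2)).add
      (tendsto_arctan_affine (hs (-b)) (a * (-b)) (pow_pos ha 2))).const_mul
        (c / (a ^ 2 + b ^ 2))))
  have e : π * (√c / a - c / (a ^ 2 + b ^ 2)) = 2 * √c / a * (π / 2)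
      + b * c / (2 * a * (a ^ 2 + b ^ 2)) * 0 - c / (a ^ 2 + b ^ 2) * (π / 2 + π / 2) := by ring
  rw [e]
  exact h

lemma primitive_zero (a b c : ℝ) : primitive a b c 0 = 0 := by
  have e : (a * b) / a ^ 2 = -((-(a * b)) / a ^ 2) := by ring
  simp only [primitive, mul_zero, zero_sub, sub_zero, zero_mul, zero_div, Real.arctan_zero, mul_neg,
    neg_neg]
  rw [e, Real.arctan_neg]
  simp

/-- The mixed-sign part of the integrand is `4b²ct²/(r₀²r₁²) - c/r₀² - c/r₁²`. -/
lemma integrand_add_nonneg {a c : ℝ} (ha : 0 < a) (hc : 0 < c) (b t : ℝ) :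
    0 ≤ integrand a b c t + c / a ^ 2 * (a ^ 2 / ((a - t * b) ^ 2 + t ^ 2 * a ^ 2)
      + a ^ 2 / ((a - t * (-b)) ^ 2 + t ^ 2 * a ^ 2)) := by
  have hp := quad_pos ha b t
  have hq := quad_pos ha (-b) t
  have e : integrand a b c t + c / a ^ 2 * (a ^ 2 / ((a - t * b) ^ 2 + t ^ 2 * a ^ 2)
      + a ^ 2 / ((a - t * (-b)) ^ 2 + t ^ 2 * a ^ 2))
      = 2 * c / (c * t ^ 2 + a ^ 2) + 4 * c * b ^ 2 * t ^ 2 /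
        (((a - t * b) ^ 2 + t ^ 2 * a ^ 2) * ((a - t * (-b)) ^ 2 + t ^ 2 * a ^ 2)) := by
    unfold integrand
    have hp' := hp.ne'
    have hq' := hq.ne'
    have hd : (a - t * (-b)) ^ 2 + t ^ 2 * a ^ 2
        = (a - t * b) ^ 2 + t ^ 2 * a ^ 2 + 4 * a * b * t := by ring
    generalize (a - t * b) ^ 2 + t ^ 2 * a ^ 2 = P at *
    generalize (a - t * (-b)) ^ 2 + t ^ 2 * a ^ 2 = Q at *
    generalize 2 * c / (c * t ^ 2 + a ^ 2) = X
    field_simp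
    rw [hd]
    ring
  rw [e]
  positivity

lemma integrableOn_quad {a : ℝ} (ha : 0 < a) (b : ℝ) :
    IntegrableOn (fun t => a ^ 2 / ((a - t * b) ^ 2 + t ^ 2 * a ^ 2)) (Ioi 0) volume :=
  integrableOn_Ioi_deriv_of_nonneg' (fun t _ => hasDerivAt_arctan_quad ha b t)
    (fun t _ => div_nonneg (by positivity) (quad_pos ha b t).le)
    (tendsto_arctan_affine (by positivity) (a * b) (pow_pos ha 2))

lemma integrableOn_integrand {a c : ℝ} (ha : 0 < a) (hc : 0 < c) (b : ℝ) :
    IntegrableOn (integrand a b c) (Ioi 0) volume := by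
  have hK := ((integrableOn_quad ha b).add (integrableOn_quad ha (-b))).const_mul (c / a ^ 2)
  have hF := integrableOn_Ioi_deriv_of_nonneg'
    (fun t (_ : t ∈ Ici (0 : ℝ)) => (hasDerivAt_primitive ha hc b t).add
      (((hasDerivAt_arctan_quad ha b t).add (hasDerivAt_arctan_quad ha (-b) t)).const_mul
        (c / a ^ 2)))
    (fun t _ => integrand_add_nonneg ha hc b t)
    ((tendsto_primitive ha hc b).add
      (((tendsto_arctan_affine (by positivity) (a * b) (pow_pos ha 2)).add
        (tendsto_arctan_affine (by positivity) (a * (-b)) (pow_pos ha 2))).const_mul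
          (c / a ^ 2)))
  refine (hF.sub hK).congr_fun (fun t _ => ?_) measurableSet_Ioi
  simp

lemma integral_integrand {a c : ℝ} (ha : 0 < a) (hc : 0 < c) (b : ℝ) :
    ∫ t in Ioi (0 : ℝ), integrand a b c t = π * (√c / a - c / (a ^ 2 + b ^ 2)) := by
  rw [integral_Ioi_of_hasDerivAt_of_tendsto' (fun t _ => hasDerivAt_primitive ha hc b t)
    (integrableOn_integrand ha hc b) (tendsto_primitive ha hc b), primitive_zero, sub_zero]

lemma integrand_eq (r : ℝ → ℝ) (φ t : ℝ) :
    2 * chiF r φ / (chiF r φ * t ^ 2 + r φ ^ 2)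
      + chiF r φ * (t * deriv r φ - r φ) / (r φ * r0sq r φ t)
      - chiF r φ * (r φ + t * deriv r φ) / (r φ * r1sq r φ t)
      = integrand (r φ) (deriv r φ) (chiF r φ) t := by
  simp only [integrand, r0sq, r1sq, mul_neg, sub_neg_eq_add]

/-- The integrand is `χ/(r² + r'²) = 1 - (arctan (r'/r))'`, and `r'/r` is periodic. -/
lemma integral_chi_div (r : ℝ → ℝ) (hr : ContDiff ℝ 2 r) (hper : ∀ φ, r (φ + 2 * π) = r φ)
    (hpos : ∀ φ, 0 < r φ) (hcont : Continuous (fun φ => chiF r φ / (r φ ^ 2 + deriv r φ ^ 2))) :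
    ∫ φ in (0 : ℝ)..(2 * π), chiF r φ / (r φ ^ 2 + deriv r φ ^ 2) = 2 * π := by
  have hr1 : ContDiff ℝ 1 (deriv r) :=
    ((contDiff_succ_iff_deriv (n := 1)).1 (by simpa [one_add_one_eq_two] using hr)).2.2
  have hd : ∀ φ, HasDerivAt (fun φ => φ - Real.arctan (deriv r φ / r φ))
      (chiF r φ / (r φ ^ 2 + deriv r φ ^ 2)) φ := by
    intro φ
    have h1 : HasDerivAt r (deriv r φ) φ := (hr.differentiable (by simp) φ).hasDerivAt
    have h2 : HasDerivAt (deriv r) (deriv (deriv r) φ) φ :=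
      (hr1.differentiable (by simp) φ).hasDerivAt
    refine ((hasDerivAt_id φ).sub (h2.div h1 (hpos φ).ne').arctan).congr_deriv ?_
    have ha := hpos φ
    have hs : r φ ^ 2 + deriv r φ ^ 2 ≠ 0 := by positivity
    have hk : 1 + (deriv r φ / r φ) ^ 2 = (r φ ^ 2 + deriv r φ ^ 2) / r φ ^ 2 := by
      field_simp
    simp only [Pi.div_apply]
    rw [hk]
    unfold chiF
    field_simp
    ring
  have hper' : deriv r (2 * π) = deriv r 0 := by
    have h := deriv_comp_add_const r (2 * π) 0
    rw [funext hper, zero_add] at h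
    exact h.symm
  have hper0 : r (2 * π) = r 0 := by simpa using hper 0
  rw [intervalIntegral.integral_eq_sub_of_hasDerivAt (fun φ _ => hd φ)
    (hcont.intervalIntegrable _ _), hper', hper0]
  ring

/-- The iterated improper integral of
`F₁ + F₂ + F₃ = 2χ/(χt² + r²) + χ(tr′ − r)/(r r₀²) − χ(r + tr′)/(r r₁²)`
over `(φ,t) ∈ [0,2π] × (0,∞)` converges and equals `π(∫₀^{2π} √χ/r dφ − 2π)`. -/
theorem iterated_integral_value
    (r : ℝ → ℝ) (hr : ContDiff ℝ 2 r) (hper : ∀ φ, r (φ + 2 * π) = r φ)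
    (hpos : ∀ φ, 0 < r φ) (hchi : ∀ φ, 0 < chiF r φ) :
    (∀ φ : ℝ, IntegrableOn (fun t : ℝ =>
        2 * chiF r φ / (chiF r φ * t ^ 2 + r φ ^ 2)
          + chiF r φ * (t * deriv r φ - r φ) / (r φ * r0sq r φ t)
          - chiF r φ * (r φ + t * deriv r φ) / (r φ * r1sq r φ t)) (Ioi 0) volume) ∧
    IntervalIntegrable (fun φ : ℝ => ∫ t in Ioi (0 : ℝ),
        (2 * chiF r φ / (chiF r φ * t ^ 2 + r φ ^ 2)
          + chiF r φ * (t * deriv r φ - r φ) / (r φ * r0sq r φ t)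
          - chiF r φ * (r φ + t * deriv r φ) / (r φ * r1sq r φ t))) volume 0 (2 * π) ∧
    ∫ φ in (0:ℝ)..(2 * π), (∫ t in Ioi (0 : ℝ),
        (2 * chiF r φ / (chiF r φ * t ^ 2 + r φ ^ 2)
          + chiF r φ * (t * deriv r φ - r φ) / (r φ * r0sq r φ t)
          - chiF r φ * (r φ + t * deriv r φ) / (r φ * r1sq r φ t)))
      = π * ((∫ φ in (0:ℝ)..(2 * π), Real.sqrt (chiF r φ) / r φ) - 2 * π) := by
  have hr1 : ContDiff ℝ 1 (deriv r) :=
    ((contDiff_succ_iff_deriv (n := 1)).1 (by simpa [one_add_one_eq_two] using hr)).2.2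
  have c0 : Continuous r := hr.continuous
  have c1 : Continuous (deriv r) := hr1.continuous
  have c2 : Continuous (deriv (deriv r)) := hr1.continuous_deriv le_rfl
  have cchi : Continuous (chiF r) := by
    unfold chiF
    fun_prop
  have cA : Continuous (fun φ => √(chiF r φ) / r φ) :=
    cchi.sqrt.div c0 fun φ => (hpos φ).ne'
  have cB : Continuous (fun φ => chiF r φ / (r φ ^ 2 + deriv r φ ^ 2)) :=
    cchi.div (by fun_prop) fun φ => by have := hpos φ; positivity
  simp only [integrand_eq]
  simp_rw [fun φ => integral_integrand (hpos φ) (hchi φ) (deriv r φ)]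
  refine ⟨fun φ => integrableOn_integrand (hpos φ) (hchi φ) _, ?_, ?_⟩
  · exact (continuous_const.mul (cA.sub cB)).intervalIntegrable _ _
  · rw [intervalIntegral.integral_const_mul, intervalIntegral.integral_sub
      (cA.intervalIntegrable _ _) (cB.intervalIntegrable _ _),
      integral_chi_div r hr hper hpos cB]
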